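/- arXiv:1206.1184 — 3 statements merged into one kernel-verified Lean document; each statement's English description precedes it below -/
import Mathlib

section
/- For every integer n ≥ 3, every ε > 0, all indices a,b ∈ {1,…,n}, and every y ∈ ℝⁿ₊, the standard bubble satisfies the exact identity U_ε(y) ∂_a∂_bU_ε(y) − (n/(n−2)) ∂_aU_ε(y) ∂_bU_ε(y) = −(1/(n−2)) |∇U_ε(y)|² δ_{ab}, where |∇U_ε|² = Σ_{c=1}^n (∂_cU_ε)² and δ_{ab} is the Kronecker delta. -/
lemma hasQ {n : ℕ} (s y : Fin n → ℝ) :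
    HasFDerivAt (fun z : Fin n → ℝ => ∑ i, (z i + s i) ^ 2)
      (∑ i, (2 * (y i + s i)) • (ContinuousLinearMap.proj i : (Fin n → ℝ) →L[ℝ] ℝ)) y := by
  apply HasFDerivAt.fun_sum
  intro i _
  have h := ((ContinuousLinearMap.proj (R := ℝ) (φ := fun _ : Fin n => ℝ) i).hasFDerivAt (x := y)).add_const (s i)
  have h2 := h.pow 2
  simpa [mul_add] using h2

lemma Qapp {n : ℕ} (s y : Fin n → ℝ) (a : Fin n) :
    (∑ i, (2 * (y i + s i)) • (ContinuousLinearMap.proj i : (Fin n → ℝ) →L[ℝ] ℝ)) (Pi.single a 1)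
      = 2 * (y a + s a) := by
  simp [ContinuousLinearMap.sum_apply, Pi.single_apply]

lemma fd1 {n : ℕ} (s y : Fin n → ℝ) (K p : ℝ) (hy : 0 < ∑ i, (y i + s i) ^ 2) (b : Fin n) :
    fderiv ℝ (fun z : Fin n → ℝ => K * (∑ i, (z i + s i) ^ 2) ^ p) y (Pi.single b 1)
      = K * p * (∑ i, (y i + s i) ^ 2) ^ (p - 1) * (2 * (y b + s b)) := by
  have h := ((hasQ s y).rpow_const (p := p) (Or.inl hy.ne')).const_mul K
  rw [h.fderiv, ContinuousLinearMap.smul_apply, ContinuousLinearMap.smul_apply, Qapp]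
  simp only [smul_eq_mul]; ring

lemma fd2 {n : ℕ} (s y : Fin n → ℝ) (K p : ℝ) (hy : 0 < ∑ i, (y i + s i) ^ 2) (a b : Fin n) :
    fderiv ℝ (fun w => fderiv ℝ (fun z : Fin n → ℝ => K * (∑ i, (z i + s i) ^ 2) ^ p) w
        (Pi.single b 1)) y (Pi.single a 1)
      = K * p * ((p - 1) * (∑ i, (y i + s i) ^ 2) ^ (p - 1 - 1) * (2 * (y a + s a)) * (2 * (y b + s b))
        + (∑ i, (y i + s i) ^ 2) ^ (p - 1) * (2 * (if a = b then 1 else 0))) := by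
  have hev : (fun w => fderiv ℝ (fun z : Fin n → ℝ => K * (∑ i, (z i + s i) ^ 2) ^ p) w
        (Pi.single b 1)) =ᶠ[nhds y] fun w =>
        (K * p * (∑ i, (w i + s i) ^ 2) ^ (p - 1)) * (2 * (w b + s b)) := by
    have := (hasQ s y).continuousAt.eventually (lt_mem_nhds hy)
    filter_upwards [this] with w hw
    exact fd1 s w K p hw b
  rw [hev.fderiv_eq]
  have h := ((hasQ s y).rpow_const (p := p - 1) (Or.inl hy.ne')).const_mul (K * p)
  have h2 := (((ContinuousLinearMap.proj (R := ℝ) (φ := fun _ : Fin n => ℝ) b).hasFDerivAt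
    (x := y)).add_const (s b)).const_mul 2
  have h3 := h.mul h2
  have h4 := h3.fderiv
  simp only [ContinuousLinearMap.proj_apply] at h4
  erw [h4]
  simp only [ContinuousLinearMap.add_apply, ContinuousLinearMap.smul_apply, Qapp,
    ContinuousLinearMap.proj_apply, Pi.single_apply, smul_eq_mul, @eq_comm _ b a]
  ring



/-- the exact second-order identity
`U ∂_a∂_b U − (n/(n−2)) ∂_aU ∂_bU = −(1/(n−2)) |∇U|² δ_{ab}`
for the standard bubble `U_ε` on the half-space `ℝⁿ₊`. -/
theorem stmt_1 (n : ℕ) (hn : 3 ≤ n) (ε : ℝ) (hε : 0 < ε)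
    (U : (Fin n → ℝ) → ℝ)
    (hU : ∀ y : Fin n → ℝ, U y =
      (ε / ((ε + y ⟨n - 1, by omega⟩) ^ 2
        + ∑ i : Fin n, if (i : ℕ) < n - 1 then y i ^ 2 else 0)) ^ (((n : ℝ) - 2) / 2)) :
    ∀ (a b : Fin n) (y : Fin n → ℝ), 0 ≤ y ⟨n - 1, by omega⟩ →
      U y * fderiv ℝ (fun z => fderiv ℝ U z (Pi.single b 1)) y (Pi.single a 1)
        - (n : ℝ) / ((n : ℝ) - 2)
            * fderiv ℝ U y (Pi.single a 1) * fderiv ℝ U y (Pi.single b 1)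
        = -(1 / ((n : ℝ) - 2)) * (∑ c : Fin n, (fderiv ℝ U y (Pi.single c 1)) ^ 2)
            * (if a = b then 1 else 0) := by
  intro a b y hy
  set l : Fin n := ⟨n - 1, by omega⟩ with hl
  set s : Fin n → ℝ := fun i => if i = l then ε else 0 with hs
  have hQ : ∀ z : Fin n → ℝ, (ε + z l) ^ 2
        + (∑ i : Fin n, if (i : ℕ) < n - 1 then z i ^ 2 else 0) = ∑ i, (z i + s i) ^ 2 := by
    intro z
    have : (ε + z l) ^ 2 = ∑ i : Fin n, if i = l then (ε + z i) ^ 2 else 0 := by simp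
    rw [this, ← Finset.sum_add_distrib]
    refine Finset.sum_congr rfl fun i _ => ?_
    by_cases h : i = l
    · have : ¬ ((i : ℕ) < n - 1) := by rw [h, hl]; simp
      simp only [hs, if_pos h, if_neg this]; ring
    · have : (i : ℕ) < n - 1 := by
        have h1 : (i : ℕ) ≠ n - 1 := fun h2 => h (Fin.ext h2)
        have := i.2
        omega
      simp only [hs, if_neg h, if_pos this]; ring
  have hn' : (3 : ℝ) ≤ n := by exact_mod_cast hn
  set p : ℝ := -(((n : ℝ) - 2) / 2) with hp
  have hUf : U = fun z => ε ^ (-p) * (∑ i, (z i + s i) ^ 2) ^ p := by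
    funext z
    have h0 : 0 ≤ ∑ i, (z i + s i) ^ 2 := Finset.sum_nonneg fun i _ => sq_nonneg _
    rw [hU, hQ, Real.div_rpow hε.le h0, hp, Real.rpow_neg h0, neg_neg, div_eq_mul_inv]
  have hpos : 0 < ∑ i, (y i + s i) ^ 2 := by
    rw [← hQ]
    have : 0 ≤ ∑ i : Fin n, if (i : ℕ) < n - 1 then y i ^ 2 else 0 :=
      Finset.sum_nonneg fun i _ => by split_ifs <;> positivity
    have : 0 < ε + y l := by linarith
    positivity
  rw [hUf]
  simp only [fd2 s y _ p hpos, fd1 s y _ p hpos]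
  set K := ε ^ (-p)
  have hsum : ∑ c, (K * p * (∑ i, (y i + s i) ^ 2) ^ (p - 1) * (2 * (y c + s c))) ^ 2
      = 4 * (K * p * (∑ i, (y i + s i) ^ 2) ^ (p - 1)) ^ 2 * ∑ i, (y i + s i) ^ 2 := by
    rw [Finset.mul_sum]
    exact Finset.sum_congr rfl fun i _ => by ring
  rw [hsum]
  generalize (∑ i, (y i + s i) ^ 2) = Q at *
  have e1 : Q ^ (p - 1) = Q ^ (p - 1 - 1) * Q := by
    rw [← Real.rpow_add_one hpos.ne']; congr 1; ring
  have e0 : Q ^ p = Q ^ (p - 1 - 1) * Q * Q := by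
    rw [← e1, ← Real.rpow_add_one hpos.ne']; congr 1; ring
  rw [e0, e1]
  have hnp : (n : ℝ) = 2 - 2 * p := by rw [hp]; ring
  have hp0 : p ≠ 0 := by rw [hp]; intro h; linarith
  have h1 : (n : ℝ) / ((n : ℝ) - 2) = (p - 1) / p := by
    rw [hnp]; rw [show 2 - 2 * p - 2 = -(2 * p) by ring]
    field_simp
    try ring
  have h2 : 1 / ((n : ℝ) - 2) = - (1 / (2 * p)) := by
    rw [hnp]; rw [show 2 - 2 * p - 2 = -(2 * p) by ring]
    field_simp
    try ring
  rw [h1, h2]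
  field_simp
  ring
end

section
/- Let n ≥ 3, ε > 0, ρ > 0, and let T be a smooth map from ℝⁿ₊ to symmetric n×n real matrices with Σ_{a=1}^n T_{aa} ≡ 0, such that for each a = 1,…,n one has Σ_{b=1}^n ( U_ε ∂_bT_{ab} + (2n/(n−2)) ∂_bU_ε · T_{ab} ) = 0 at every point of B⁺_ρ(0). Then ((n−2)/(4(n−1))) U_ε Σ_{a,b=1}^n ∂_a∂_bT_{ab} + Σ_{a,b=1}^n ∂_a( ∂_bU_ε · T_{ab} ) = 0 at every point of B⁺_ρ(0). -/
theorem aux_half {n : ℕ} (N : Fin n) (f : (Fin n → ℝ) → ℝ) (x : Fin n → ℝ)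
    (hx : 0 ≤ x N) (hf : DifferentiableAt ℝ f x) (s : Set (Fin n → ℝ)) (hs : s ∈ nhds x)
    (h0 : ∀ y, 0 ≤ y N → y ∈ s → f y = 0) : fderiv ℝ f x = 0 := by
  have hconv : Convex ℝ {y : Fin n → ℝ | 0 ≤ y N} := by
    intro y hy z hz a b ha hb _
    simp only [Set.mem_ofPred_eq, Pi.add_apply, Pi.smul_apply, smul_eq_mul] at *
    positivity
  have hint : (interior {y : Fin n → ℝ | 0 ≤ y N}).Nonempty := by
    refine ⟨fun _ => 1, ?_⟩
    rw [mem_interior]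
    refine ⟨{y | 0 < y N}, fun y hy => le_of_lt (show 0 < y N from hy), ?_, by simp⟩
    exact isOpen_lt continuous_const (continuous_apply N)
  have hu : UniqueDiffWithinAt ℝ {y : Fin n → ℝ | 0 ≤ y N} x :=
    uniqueDiffWithinAt_convex hconv hint (subset_closure hx)
  have h1 : HasFDerivWithinAt f (fderiv ℝ f x) {y : Fin n → ℝ | 0 ≤ y N} x :=
    hf.hasFDerivAt.hasFDerivWithinAt
  have h2 : HasFDerivWithinAt f (0 : (Fin n → ℝ) →L[ℝ] ℝ) {y : Fin n → ℝ | 0 ≤ y N} x := by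
    refine (hasFDerivWithinAt_const (0:ℝ) x _).congr_of_eventuallyEq ?_ ?_
    · filter_upwards [self_mem_nhdsWithin, mem_nhdsWithin_of_mem_nhds hs] with y hy hys
      exact h0 y hy hys
    · exact h0 x hx (mem_of_mem_nhds hs)
  exact hu.eq h1 h2

theorem aux_sum {n : ℕ} (N : Fin n) (hN : (N : ℕ) = n - 1) (ε : ℝ) (y : Fin n → ℝ) :
    (ε + y N) ^ 2 + (∑ i : Fin n, if (i : ℕ) < n - 1 then y i ^ 2 else 0)
      = ∑ i : Fin n, (y i + if i = N then ε else 0) ^ 2 := by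
  have h : ∀ i : Fin n, (y i + if i = N then ε else 0) ^ 2
      = (if i = N then (ε + y N) ^ 2 else 0) + (if (i : ℕ) < n - 1 then y i ^ 2 else 0) := by
    intro i
    by_cases hi : i = N
    · subst hi
      simp [hN]; ring
    · have : (i : ℕ) < n - 1 := by
        have h1 := i.2
        have h2 : (i : ℕ) ≠ N := fun h => hi (Fin.ext h)
        omega
      simp [hi, this]
  simp only [h, Finset.sum_add_distrib]
  simp

theorem aux_z {n : ℕ} (N : Fin n) (ε : ℝ) (b : Fin n) (x : Fin n → ℝ) :
    HasFDerivAt (fun y : Fin n → ℝ => y b + if b = N then ε else 0)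
      (ContinuousLinearMap.proj b : (Fin n → ℝ) →L[ℝ] ℝ) x :=
  (ContinuousLinearMap.proj b : (Fin n → ℝ) →L[ℝ] ℝ).hasFDerivAt.add_const _

theorem aux_q {n : ℕ} (z : Fin n → (Fin n → ℝ) → ℝ) (x : Fin n → ℝ)
    (hz : ∀ b, HasFDerivAt (z b) (ContinuousLinearMap.proj b : (Fin n → ℝ) →L[ℝ] ℝ) x) :
    ∃ L : (Fin n → ℝ) →L[ℝ] ℝ, HasFDerivAt (fun y => ∑ i, z i y ^ 2) L x ∧
      ∀ a, L (Pi.single a 1) = 2 * z a x := by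
  refine ⟨_, HasFDerivAt.fun_sum (fun i _ => (hz i).pow 2), ?_⟩
  intro a
  simp [Pi.single_apply]

theorem aux_U {n : ℕ} (ε m : ℝ) (q U : (Fin n → ℝ) → ℝ) (x : Fin n → ℝ)
    (hε : 0 < ε) (L : (Fin n → ℝ) →L[ℝ] ℝ) (hq : HasFDerivAt q L x) (hpos : 0 < q x)
    (hU : ∀ y, U y = (ε / q y) ^ m) :
    HasFDerivAt U ((-m * (U x / q x)) • L) x := by
  have hUf : U = fun y => (ε / q y) ^ m := funext hU
  have h1 : HasFDerivAt (fun y => ε / q y) ((-(ε / q x ^ 2)) • L) x := by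
    have hd : HasDerivAt (fun t : ℝ => ε / t) (-(ε / q x ^ 2)) (q x) := by
      have := (hasDerivAt_inv hpos.ne').const_mul ε
      have h' : HasDerivAt (fun t : ℝ => ε / t) _ (q x) := this
      exact h'.congr_deriv (by ring)
    exact hd.comp_hasFDerivAt x hq
  have hp : 0 < ε / q x := by positivity
  have h2 := h1.rpow_const (p := m) (Or.inl hp.ne')
  rw [hUf]
  refine h2.congr_fderiv ?_
  rw [smul_smul]
  congr 1
  simp only
  rw [Real.rpow_sub_one hp.ne']
  field_simp

/-- if `T` is a smooth symmetric trace-free 2-tensor on `ℝⁿ₊` satisfying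
`Σ_b (U ∂_bT_{ab} + (2n/(n−2)) ∂_bU T_{ab}) = 0` on the half-ball `B⁺_ρ(0)`, then
`((n−2)/(4(n−1))) U Σ_{a,b} ∂_a∂_bT_{ab} + Σ_{a,b} ∂_a(∂_bU T_{ab}) = 0` on `B⁺_ρ(0)`. -/
theorem stmt_2 (n : ℕ) (hn : 3 ≤ n) (ε ρ : ℝ) (hε : 0 < ε) (hρ : 0 < ρ)
    (U : (Fin n → ℝ) → ℝ)
    (hU : ∀ y : Fin n → ℝ, U y =
      (ε / ((ε + y ⟨n - 1, by omega⟩) ^ 2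
        + ∑ i : Fin n, if (i : ℕ) < n - 1 then y i ^ 2 else 0)) ^ (((n : ℝ) - 2) / 2))
    (T : Fin n → Fin n → (Fin n → ℝ) → ℝ)
    (hTsmooth : ∀ a b, ContDiff ℝ (⊤ : ℕ∞) (T a b))
    (hTsymm : ∀ a b, ∀ x : Fin n → ℝ, 0 ≤ x ⟨n - 1, by omega⟩ → T a b x = T b a x)
    (hTtrace : ∀ x : Fin n → ℝ, 0 ≤ x ⟨n - 1, by omega⟩ → (∑ a : Fin n, T a a x) = 0)
    (hPDE : ∀ a : Fin n, ∀ x : Fin n → ℝ, 0 ≤ x ⟨n - 1, by omega⟩ →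
      Real.sqrt (∑ c : Fin n, x c ^ 2) < ρ →
      (∑ b : Fin n, (U x * fderiv ℝ (T a b) x (Pi.single b 1)
        + 2 * (n : ℝ) / ((n : ℝ) - 2) * fderiv ℝ U x (Pi.single b 1) * T a b x)) = 0) :
    ∀ x : Fin n → ℝ, 0 ≤ x ⟨n - 1, by omega⟩ → Real.sqrt (∑ c : Fin n, x c ^ 2) < ρ →
      ((n : ℝ) - 2) / (4 * ((n : ℝ) - 1)) * U x
          * (∑ a : Fin n, ∑ b : Fin n,
              fderiv ℝ (fun z => fderiv ℝ (T a b) z (Pi.single b 1)) x (Pi.single a 1))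
        + (∑ a : Fin n, ∑ b : Fin n,
            fderiv ℝ (fun z => fderiv ℝ U z (Pi.single b 1) * T a b z) x (Pi.single a 1))
        = 0 := by
  intro x hx hxρ
  set N : Fin n := ⟨n - 1, by omega⟩ with hN
  have hNv : (N : ℕ) = n - 1 := rfl
  have hn3 : (3 : ℝ) ≤ n := by exact_mod_cast hn
  set z : Fin n → (Fin n → ℝ) → ℝ := fun b y => y b + if b = N then ε else 0 with hzdef
  set q : (Fin n → ℝ) → ℝ := fun y => ∑ i, z i y ^ 2 with hqdef
  have hz : ∀ b y, HasFDerivAt (z b) (ContinuousLinearMap.proj b : (Fin n → ℝ) →L[ℝ] ℝ) y :=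
    fun b y => aux_z N ε b y
  have hUq : ∀ y, U y = (ε / q y) ^ (((n : ℝ) - 2) / 2) := by
    intro y
    rw [hU y, aux_sum N hNv ε y]
  have hqpos : ∀ y : Fin n → ℝ, -ε < y N → 0 < q y := by
    intro y hy
    have h1 : 0 < z N y ^ 2 := by
      have : 0 < z N y := by simp [hzdef]; linarith
      positivity
    exact lt_of_lt_of_le h1
      (Finset.single_le_sum (f := fun i => z i y ^ 2) (fun i _ => sq_nonneg _) (Finset.mem_univ N))
  choose L hL hLa using fun y => aux_q z y (fun b => hz b y)
  have hUd : ∀ y : Fin n → ℝ, -ε < y N →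
      HasFDerivAt U ((-(((n : ℝ) - 2) / 2) * (U y / q y)) • L y) y :=
    fun y hy => aux_U ε _ q U y hε (L y) (hL y) (hqpos y hy) hUq
  have hUb : ∀ y : Fin n → ℝ, -ε < y N → ∀ b, fderiv ℝ U y (Pi.single b 1)
      = -((n : ℝ) - 2) * (U y / q y) * z b y := by
    intro y hy b
    rw [(hUd y hy).fderiv]
    simp [hLa]
    ring
  have hUpos : ∀ y : Fin n → ℝ, -ε < y N → 0 < U y := by
    intro y hy
    rw [hUq]
    have := hqpos y hy
    positivity
  have hxε : -ε < x N := by linarith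
  have hQ := hqpos x hxε
  have hTd : ∀ a b y, DifferentiableAt ℝ (T a b) y := fun a b y =>
    ((hTsmooth a b).differentiable (by simp)) y
  have hDd : ∀ a b (v y : Fin n → ℝ), DifferentiableAt ℝ (fun w => fderiv ℝ (T a b) w v) y := by
    intro a b v y
    have h1 : ContDiff ℝ 1 (fderiv ℝ (T a b)) :=
      (hTsmooth a b).fderiv_right (WithTop.coe_le_coe.2 (le_top : ((1 + 1 : ℕ∞)) ≤ ⊤))
    exact ((h1.differentiable (by simp)) y).clm_apply (differentiableAt_const v)
  set D : Fin n → Fin n → (Fin n → ℝ) → ℝ :=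
    fun a b w => fderiv ℝ (T a b) w (Pi.single b 1) with hD
  have hG0 : ∀ a (y : Fin n → ℝ), 0 ≤ y N → Real.sqrt (∑ c : Fin n, y c ^ 2) < ρ →
      q y * (∑ b, D a b y) - 2 * n * ∑ b, z b y * T a b y = 0 := by
    intro a y hy hyρ
    have hyε : -ε < y N := by linarith
    have h := hPDE a y hy hyρ
    have hq0 := hqpos y hyε
    have hu0 := hUpos y hyε
    have h2 : ∀ b, U y * fderiv ℝ (T a b) y (Pi.single b 1)
        + 2 * (n : ℝ) / ((n : ℝ) - 2) * fderiv ℝ U y (Pi.single b 1) * T a b y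
        = U y / q y * (q y * D a b y - 2 * n * (z b y * T a b y)) := by
      intro b
      rw [hUb y hyε b]
      have : (n : ℝ) - 2 ≠ 0 := by linarith
      simp only [hD]
      field_simp
      ring
    rw [Finset.sum_congr rfl (fun b _ => h2 b), ← Finset.mul_sum, Finset.sum_sub_distrib,
      ← Finset.mul_sum, ← Finset.mul_sum] at h
    rcases mul_eq_zero.1 h with h | h
    · exact absurd h (by positivity)
    · exact h
  have hball : {y : Fin n → ℝ | Real.sqrt (∑ c : Fin n, y c ^ 2) < ρ} ∈ nhds x := by
    refine IsOpen.mem_nhds (isOpen_lt ?_ continuous_const) hxρ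
    fun_prop
  have hsymm' : ∀ a b, fderiv ℝ (T a b) x = fderiv ℝ (T b a) x := by
    intro a b
    have h := aux_half N (fun y => T a b y - T b a y) x hx ((hTd a b x).sub (hTd b a x))
      Set.univ Filter.univ_mem (fun y hy _ => sub_eq_zero.2 (hTsymm a b y hy))
    rw [fderiv_fun_sub (hTd a b x) (hTd b a x)] at h
    exact sub_eq_zero.1 h
  have hGder : ∀ a, 2 * z a x * (∑ b, D a b x)
      + q x * (∑ b, fderiv ℝ (D a b) x (Pi.single a 1))
      - 2 * n * (T a a x + ∑ b, z b x * fderiv ℝ (T a b) x (Pi.single a 1)) = 0 := by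
    intro a
    have h1 := (hL x).mul (HasFDerivAt.fun_sum (u := Finset.univ)
      (fun b _ => (hDd a b (Pi.single b 1) x).hasFDerivAt))
    have h2 := (HasFDerivAt.fun_sum (u := Finset.univ)
      (fun b _ => (hz b x).mul (hTd a b x).hasFDerivAt)).const_mul (2 * (n : ℝ))
    have h3 := h1.sub h2
    have h4 := aux_half N _ x hx h3.differentiableAt _ hball (fun y hy hyρ => hG0 a y hy hyρ)
    rw [h3.fderiv] at h4
    have h5 := congrArg (fun M : (Fin n → ℝ) →L[ℝ] ℝ => M (Pi.single a 1)) h4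
    simp [Pi.single_apply, hLa, Finset.sum_add_distrib] at h5
    rw [← h5]
    ring
  have hVd : HasFDerivAt (fun y => U y / q y)
      ((-((n : ℝ) / 2) * (U x / q x ^ 2)) • L x) x := by
    have h := (hUd x hxε).mul ((hasDerivAt_inv hQ.ne').comp_hasFDerivAt x (hL x))
    have h' : HasFDerivAt (fun y => U y / q y) _ x := h
    refine h'.congr_fderiv ?_
    ext v
    simp
    field_simp
    ring
  have hsec : ∀ a b, fderiv ℝ (fun w => fderiv ℝ U w (Pi.single b 1) * T a b w) x (Pi.single a 1)
      = -((n : ℝ) - 2) * (U x / q x ^ 2) * (-(n : ℝ) * (z a x * (z b x * T a b x))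
        + q x * ((if a = b then T a b x else 0)
          + z b x * fderiv ℝ (T a b) x (Pi.single a 1))) := by
    intro a b
    have h1 := ((hVd.const_mul (-((n : ℝ) - 2))).mul (hz b x)).mul (hTd a b x).hasFDerivAt
    have hev : (fun w => fderiv ℝ U w (Pi.single b 1) * T a b w)
        =ᶠ[nhds x] (fun w => -((n : ℝ) - 2) * (U w / q w) * z b w * T a b w) := by
      have ho : {y : Fin n → ℝ | -ε < y N} ∈ nhds x :=
        (isOpen_lt continuous_const (continuous_apply N)).mem_nhds hxε
      filter_upwards [ho] with y hy
      rw [hUb y hy b]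
    rw [hev.fderiv_eq]
    have h1' : HasFDerivAt (fun w => -((n : ℝ) - 2) * (U w / q w) * z b w * T a b w) _ x := h1
    rw [h1'.fderiv]
    have hs : (Pi.single a (1:ℝ) : Fin n → ℝ) b = if a = b then 1 else 0 := by
      simp [Pi.single_apply, eq_comm]
    simp [hLa, hs]
    by_cases hab : a = b
    · simp [hab]
      field_simp
      ring
    · simp [hab]
      field_simp
      ring
  -- final assembly
  have hE : ∑ a, ∑ b, z b x * fderiv ℝ (T a b) x (Pi.single a 1) = ∑ a, z a x * ∑ b, D a b x := by
    rw [Finset.sum_comm]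
    refine Finset.sum_congr rfl fun b _ => ?_
    rw [Finset.mul_sum]
    refine Finset.sum_congr rfl fun a _ => ?_
    rw [hsymm' a b]
  have hZ : q x * (∑ a, z a x * ∑ b, D a b x)
      = 2 * n * ∑ a, ∑ b, z a x * (z b x * T a b x) := by
    rw [Finset.mul_sum, Finset.mul_sum]
    refine Finset.sum_congr rfl fun a _ => ?_
    rw [← Finset.mul_sum]
    linear_combination z a x * hG0 a x hx hxρ
  have hS : 2 * (∑ a, z a x * ∑ b, D a b x)
      + q x * (∑ a, ∑ b, fderiv ℝ (D a b) x (Pi.single a 1))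
      - 2 * n * (∑ a, z a x * ∑ b, D a b x) = 0 := by
    have h := Finset.sum_congr (rfl : (Finset.univ : Finset (Fin n)) = Finset.univ)
      (fun a _ => hGder a)
    rw [Finset.sum_const_zero, Finset.sum_sub_distrib, Finset.sum_add_distrib,
      ← Finset.mul_sum, ← Finset.mul_sum, Finset.sum_add_distrib, hTtrace x hx, hE] at h
    simp only [mul_assoc] at h
    rw [← Finset.mul_sum] at h
    linarith
  have hR : (∑ a, ∑ b,
      fderiv ℝ (fun w => fderiv ℝ U w (Pi.single b 1) * T a b w) x (Pi.single a 1))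
      = -((n : ℝ) - 2) * (U x / q x ^ 2) * (-(n : ℝ) * (∑ a, ∑ b, z a x * (z b x * T a b x))
        + q x * (∑ a, z a x * ∑ b, D a b x)) := by
    simp only [hsec, ← Finset.mul_sum, Finset.sum_add_distrib]
    rw [hE]
    simp only [Finset.sum_ite_eq, Finset.mem_univ, if_true]
    rw [hTtrace x hx]
    simp only [Finset.mul_sum, zero_add]
  rw [hR, hZ]
  generalize (∑ a, ∑ b, z a x * (z b x * T a b x)) = Z at *
  generalize (∑ a, z a x * ∑ b, D a b x) = W at *
  generalize (∑ a, ∑ b, fderiv ℝ (D a b) x (Pi.single a 1)) = S at *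
  have hW : W = 2 * n * Z / q x := by field_simp; linarith
  have hS' : S = (2 * n - 2) * W / q x := by field_simp; linarith
  have hn1 : (n : ℝ) - 1 ≠ 0 := by linarith
  rw [hS', hW]
  field_simp
  ring
end

section
/- Set U_r = {x ∈ ℝⁿ : |x − (0,…,0,3r/2)| < r/4}. There exists a constant C = C(n) > 0 such that for every r > 0 and every tensor H of the given class, Σ_{i,j=1}^{n−1} Σ_{1≤|α|≤d} h_{ij,α}² r^{2|α|−4+n} ≤ C ∫_{U_r} Σ_{a,b,c,d=1}^n Z_{abcd}(x)² dx + C r^{−1} ∫_{{x̄ ∈ ℝ^{n−1} : 4r/3 ≤ |x̄| ≤ 5r/3}} Σ_{i,j=1}^{n−1} (∂_nH_{ij}(x̄,0))² dx̄. -/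
open MeasureTheory

namespace Aux
open MvPolynomial

noncomputable def AA {n : ℕ} (H : Fin n → Fin n → MvPolynomial (Fin n) ℝ) (a c : Fin n) :
    MvPolynomial (Fin n) ℝ :=
  (∑ e : Fin n,
          (MvPolynomial.pderiv c (MvPolynomial.pderiv e (H a e))
            + MvPolynomial.pderiv a (MvPolynomial.pderiv e (H c e))
            - MvPolynomial.pderiv e (MvPolynomial.pderiv e (H a c))))
        - MvPolynomial.C (1 / ((n : ℝ) - 1))
            * (∑ e : Fin n, ∑ f : Fin n,
                MvPolynomial.pderiv e (MvPolynomial.pderiv f (H e f)))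
            * (if a = c then 1 else 0)

noncomputable def ZZ {n : ℕ} (H : Fin n → Fin n → MvPolynomial (Fin n) ℝ) (a b c d : Fin n) :
    MvPolynomial (Fin n) ℝ :=
  MvPolynomial.pderiv b (MvPolynomial.pderiv d (H a c))
          - MvPolynomial.pderiv b (MvPolynomial.pderiv c (H a d))
          + MvPolynomial.pderiv a (MvPolynomial.pderiv c (H d b))
          - MvPolynomial.pderiv a (MvPolynomial.pderiv d (H b c))
          + MvPolynomial.C (1 / ((n : ℝ) - 2))
              * ((if b = d then AA H a c else 0) - (if b = c then AA H a d else 0)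
                  + (if a = c then AA H b d else 0) - (if d = b then AA H b c else 0))

variable {n : ℕ}

set_option linter.unusedSimpArgs false

lemma AA_zero (hn : 4 ≤ n) (H : Fin n → Fin n → MvPolynomial (Fin n) ℝ)
    (hs : ∀ a b, H a b = H b a) (hZ : ∀ a b c d, ZZ H a b c d = 0) (a c : Fin n) :
    AA H a c = 0 := by
  have hk : (C (1 / ((n : ℝ) - 2)) : MvPolynomial (Fin n) ℝ) ≠ 0 := by
    have : (4 : ℝ) ≤ n := by exact_mod_cast hn
    rw [Ne, C_eq_zero]
    have : (0 : ℝ) < n - 2 := by linarith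
    positivity
  have hoff : ∀ b d : Fin n, b ≠ d → AA H b d = 0 := by
    intro b d hbd
    obtain ⟨a, ha⟩ : ∃ a : Fin n, a ∉ ({b, d} : Finset (Fin n)) := by
      by_contra! h
      have h1 := Finset.card_le_card (show (Finset.univ : Finset (Fin n)) ⊆ {b, d} from fun x _ => h x)
      have h2 : ({b, d} : Finset (Fin n)).card ≤ 2 := Finset.card_le_two
      simp at h1; omega
    simp only [Finset.mem_insert, Finset.mem_singleton, not_or] at ha
    obtain ⟨hab, had⟩ := ha
    have h1 := hZ a b a d
    have h2 := hZ a b d a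
    unfold ZZ at h1 h2
    simp only [hbd, hab, had, Ne.symm hbd, Ne.symm hab, Ne.symm had, if_true, if_false] at h1 h2
    rw [hs a b, hs a d, hs b d] at *
    have : C (1 / ((n : ℝ) - 2)) * AA H b d = 0 := by
      linear_combination h1 + h2
    exact (mul_eq_zero.mp this).resolve_left hk
  by_cases hac : a = c
  · subst hac
    obtain ⟨b, hb⟩ : ∃ b : Fin n, b ≠ a := by
      have : Nontrivial (Fin n) := Fin.nontrivial_iff_two_le.mpr (by omega)
      exact exists_ne a
    have h1 := hZ a b a b
    have h2 := hZ b a a b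
    unfold ZZ at h1 h2
    simp only [hb, Ne.symm hb, if_true, if_false, hoff b a hb] at h1 h2
    rw [hs b a] at *
    have : C (1 / ((n : ℝ) - 2)) * AA H a a = 0 := by
      linear_combination h1 + h2
    exact (mul_eq_zero.mp this).resolve_left hk
  · exact hoff a c hac

lemma R_zero (hn : 4 ≤ n) (H : Fin n → Fin n → MvPolynomial (Fin n) ℝ)
    (hs : ∀ a b, H a b = H b a) (hZ : ∀ a b c d, ZZ H a b c d = 0) (a b c d : Fin n) :
    pderiv b (pderiv d (H a c)) - pderiv b (pderiv c (H a d)) + pderiv a (pderiv c (H d b))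
      - pderiv a (pderiv d (H b c)) = 0 := by
  have h := hZ a b c d
  unfold ZZ at h
  simpa [AA_zero hn H hs hZ] using h

noncomputable def EE (p : MvPolynomial (Fin n) ℝ) : MvPolynomial (Fin n) ℝ :=
  ∑ i, X i * pderiv i p

lemma coeff_EE (p : MvPolynomial (Fin n) ℝ) (m : Fin n →₀ ℕ) :
    coeff m (EE p) = (m.sum (fun _ e => e) : ℕ) * coeff m p := by
  induction p using MvPolynomial.induction_on' with
  | monomial u a =>
    unfold EE
    simp only [X_mul_pderiv_monomial]
    rw [← Finset.sum_smul, coeff_smul, coeff_monomial]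
    split_ifs with h
    · subst h
      rw [Finsupp.sum_fintype _ _ (by simp)]
      simp
    · simp
  | add p q hp hq =>
    have : EE (p + q) = EE p + EE q := by
      simp [EE, mul_add, Finset.sum_add_distrib]
    rw [this, coeff_add, hp, hq, coeff_add]; ring

lemma EE_zero (p : MvPolynomial (Fin n) ℝ) (hp : ∀ m ∈ p.support, 1 ≤ m.sum (fun _ e => e))
    (h : EE (EE p) + EE p = 0) : p = 0 := by
  by_contra hne
  obtain ⟨m, hm⟩ := MvPolynomial.support_nonempty.mpr hne
  have h1 := hp m hm
  have h2 := congrArg (coeff m) h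
  rw [coeff_add, coeff_EE, coeff_EE, coeff_zero] at h2
  have h3 : (1 : ℝ) ≤ (m.sum (fun _ e => e) : ℕ) := by exact_mod_cast h1
  have h4 : coeff m p ≠ 0 := by simpa using hm
  apply h4
  have : (((m.sum (fun _ e => e) : ℕ) : ℝ) * (((m.sum (fun _ e => e) : ℕ) : ℝ) + 1)) * coeff m p = 0 := by
    linear_combination h2
  refine (mul_eq_zero.mp this).resolve_left (by positivity)

lemma contraction (H : Fin n → Fin n → MvPolynomial (Fin n) ℝ)
    (hs : ∀ a b, H a b = H b a)
    (hR : ∀ a b c d, pderiv b (pderiv d (H a c)) - pderiv b (pderiv c (H a d))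
      + pderiv a (pderiv c (H d b)) - pderiv a (pderiv d (H b c)) = 0)
    (hS : ∀ i, ∑ j, X j * H i j = 0) (a c : Fin n) : EE (EE (H a c)) + EE (H a c) = 0 := by
  have h1 : ∀ i k, ∑ j, X j * pderiv k (H i j) = - H i k := by
    intro i k
    have := congrArg (pderiv k) (hS i)
    simp only [map_sum, Derivation.leibniz, smul_eq_mul, pderiv_X, map_zero, Finset.sum_add_distrib,
      Pi.single_apply, mul_ite, mul_one, mul_zero, Finset.sum_ite_eq, Finset.sum_ite_eq', Finset.mem_univ, if_true] at this
    linear_combination this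
  have h2 : ∀ i k l, ∑ j, X j * pderiv l (pderiv k (H i j)) = - pderiv l (H i k) - pderiv k (H i l) := by
    intro i k l
    have := congrArg (pderiv l) (h1 i k)
    simp only [map_sum, Derivation.leibniz, smul_eq_mul, pderiv_X, map_zero, Finset.sum_add_distrib,
      Pi.single_apply, mul_ite, mul_one, mul_zero, Finset.sum_ite_eq, Finset.sum_ite_eq', Finset.mem_univ, if_true, map_neg] at this
    linear_combination this
  have hE : ∀ b, ∑ d, X d * pderiv b (pderiv d (H a c)) = pderiv b (EE (H a c)) - pderiv b (H a c) := by
    intro b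
    unfold EE
    simp only [map_sum, Derivation.leibniz, smul_eq_mul, pderiv_X, map_zero, Finset.sum_add_distrib,
      Pi.single_apply, mul_ite, mul_one, mul_zero, Finset.sum_ite_eq, Finset.sum_ite_eq', Finset.mem_univ, if_true]
    ring
  have T1 : ∑ b, X b * ∑ d, X d * pderiv b (pderiv d (H a c)) = EE (EE (H a c)) - EE (H a c) := by
    simp only [hE, mul_sub, Finset.sum_sub_distrib]
    rfl
  have T2 : ∑ b, X b * ∑ d, X d * pderiv b (pderiv c (H a d)) = - EE (H a c) + H a c := by
    simp only [h2, mul_sub, mul_neg, Finset.sum_sub_distrib, Finset.sum_neg_distrib, h1]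
    unfold EE; ring
  have T3 : ∑ b, X b * ∑ d, X d * pderiv a (pderiv c (H d b)) = 2 * H a c := by
    have : ∀ b, ∑ d, X d * pderiv a (pderiv c (H d b)) = - pderiv a (H c b) - pderiv c (H a b) := by
      intro b
      rw [hs c b, hs a b, ← h2 b c a]
      exact Finset.sum_congr rfl fun d _ => by rw [hs]
    simp only [this, mul_sub, mul_neg, Finset.sum_sub_distrib, Finset.sum_neg_distrib, h1]
    rw [hs c a]; ring
  have T4 : ∑ b, X b * ∑ d, X d * pderiv a (pderiv d (H b c)) = - EE (H a c) + H a c := by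
    have : ∑ b, X b * ∑ d, X d * pderiv a (pderiv d (H b c))
        = ∑ d, X d * ∑ b, X b * pderiv a (pderiv d (H c b)) := by
      simp only [Finset.mul_sum]
      rw [Finset.sum_comm]
      refine Finset.sum_congr rfl fun d _ => Finset.sum_congr rfl fun b _ => ?_
      rw [hs b c]; ring
    rw [this]
    simp only [h2, mul_sub, mul_neg, Finset.sum_sub_distrib, Finset.sum_neg_distrib, h1]
    unfold EE; rw [hs c a]; ring
  have T : ∑ b, X b * ∑ d, X d * (pderiv b (pderiv d (H a c)) - pderiv b (pderiv c (H a d))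
      + pderiv a (pderiv c (H d b)) - pderiv a (pderiv d (H b c))) = 0 := by
    simp [hR]
  simp only [mul_sub, mul_add, Finset.sum_sub_distrib, Finset.sum_add_distrib] at T
  rw [T1, T2, T3, T4] at T
  linear_combination T

lemma eval_indep (p : MvPolynomial (Fin n) ℝ) (k : Fin n) (h : pderiv k p = 0)
    (x y : Fin n → ℝ) (hxy : ∀ i, i ≠ k → x i = y i) : eval x p = eval y p := by
  rw [eval_eq', eval_eq']
  refine Finset.sum_congr rfl fun m hm => ?_
  have hmk : m k = 0 := by
    by_contra hne
    have h1 := congrArg (coeff (m - Finsupp.single k 1)) h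
    rw [coeff_zero] at h1
    have h2 : coeff m (X k * pderiv k p) = m k * coeff m p := by
      clear h h1 hm
      induction p using MvPolynomial.induction_on' with
      | monomial u a =>
        rw [X_mul_pderiv_monomial, coeff_smul, coeff_monomial]
        split_ifs with h
        · subst h; simp
        · simp
      | add p q hp hq => simp [mul_add, hp, hq]
    rw [h, mul_zero, coeff_zero] at h2
    have h4 : coeff m p ≠ 0 := by simpa using hm
    exact (mul_ne_zero (by exact_mod_cast hne) h4) h2.symm
  congr 1
  refine Finset.prod_congr rfl fun i _ => ?_
  by_cases hi : i = k
  · subst hi; simp [hmk]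
  · rw [hxy i hi]

lemma zero_of_open (p : MvPolynomial (Fin n) ℝ) (U : Set (Fin n → ℝ)) (hU : IsOpen U)
    (hne : U.Nonempty) (h : ∀ x ∈ U, eval x p = 0) : p = 0 := by
  obtain ⟨x, hx⟩ := hne
  obtain ⟨ε, hε, hb⟩ := Metric.isOpen_iff.mp hU x hx
  refine MvPolynomial.funext_set (fun i => Metric.ball (x i) ε) (fun i => ?_) ?_
  · rw [Real.ball_eq_Ioo]; exact Set.Ioo_infinite (by linarith)
  · intro y hy
    rw [map_zero]
    apply h; apply hb
    rw [ball_pi _ hε]; exact hy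

lemma vanish (hn : 4 ≤ n) (H : Fin n → Fin n → MvPolynomial (Fin n) ℝ) (N : Fin n)
    (hNv : (N : ℕ) = n - 1)
    (hdeg : ∀ a b : Fin n, ∀ m ∈ (H a b).support, 1 ≤ m.sum (fun _ e => e))
    (hs : ∀ a b, H a b = H b a) (hN : ∀ a, H a N = 0)
    (hS : ∀ i : Fin n, (i : ℕ) < n - 1 → ∀ x : Fin n → ℝ, x N = 0 →
        (∑ j : Fin n, if (j : ℕ) < n - 1 then x j * MvPolynomial.eval x (H i j) else 0) = 0)
    (hZ : ∀ a b c d, ZZ H a b c d = 0)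
    (U : Set (Fin n → ℝ)) (hU : IsOpen U) (hne : U.Nonempty)
    (hb : ∀ x ∈ U, ∀ i j : Fin n, (i : ℕ) < n - 1 → (j : ℕ) < n - 1 →
      eval (fun a : Fin n => if (a : ℕ) < n - 1 then x a else 0) (pderiv N (H i j)) = 0) :
    ∀ a b, H a b = 0 := by
  have hN' : ∀ a, H N a = 0 := fun a => by rw [hs, hN]
  have hlt : ∀ i : Fin n, i ≠ N → (i : ℕ) < n - 1 := by
    intro i hi
    have := i.2
    have : (i : ℕ) ≠ N := fun h => hi (Fin.ext h)
    omega
  have hR := R_zero hn H hs hZ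
  have hNN : ∀ a c, pderiv N (pderiv N (H a c)) = 0 := by
    intro a c
    have := hR a N c N
    simpa [hN, hN'] using this
  have hNd : ∀ a c, pderiv N (H a c) = 0 := by
    intro a c
    by_cases ha : a = N
    · subst ha; simp [hN']
    by_cases hc : c = N
    · subst hc; simp [hN]
    refine zero_of_open _ U hU hne fun x hx => ?_
    rw [← hb x hx a c (hlt a ha) (hlt c hc)]
    refine eval_indep _ N (hNN a c) _ _ fun i hi => ?_
    rw [if_pos (hlt i hi)]
  have hSS : ∀ i, ∑ j, X j * H i j = 0 := by
    intro i
    by_cases hi : i = N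
    · subst hi; simp [hN']
    refine MvPolynomial.funext fun x => ?_
    rw [map_zero, map_sum, ← hS i (hlt i hi) (Function.update x N 0) (by simp)]
    refine Finset.sum_congr rfl fun j _ => ?_
    by_cases hj : j = N
    · subst hj; simp [hN]
    rw [if_pos (hlt j hj), map_mul, eval_X, Function.update_of_ne hj]
    congr 1
    exact eval_indep _ N (hNd i j) _ _ fun k hk => by rw [Function.update_of_ne hk]
  intro a b
  exact EE_zero _ (hdeg a b) (contraction H hs hR hSS a b)

section Param
variable {F : Finset (Fin n →₀ ℕ)}

noncomputable def HH (c : Fin n → Fin n → F → ℝ) (a b : Fin n) : MvPolynomial (Fin n) ℝ :=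
  ∑ m : F, monomial m.1 (c a b m)

lemma coeff_HH (c : Fin n → Fin n → F → ℝ) (a b : Fin n) (m : F) :
    coeff m.1 (HH c a b) = c a b m := by
  classical
  unfold HH
  rw [coeff_sum]
  simp only [coeff_monomial]
  rw [Finset.sum_eq_single m]
  · simp
  · intro k _ hk
    rw [if_neg (fun h => hk (Subtype.ext h))]
  · simp

lemma coeff_HH' (c : Fin n → Fin n → F → ℝ) (a b : Fin n) (m : Fin n →₀ ℕ) (hm : m ∉ F) :
    coeff m (HH c a b) = 0 := by
  classical
  unfold HH
  rw [coeff_sum]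
  simp only [coeff_monomial]
  refine Finset.sum_eq_zero fun k _ => ?_
  rw [if_neg]
  rintro rfl
  exact hm k.2

lemma HH_of (H : Fin n → Fin n → MvPolynomial (Fin n) ℝ)
    (h : ∀ a b, ∀ m ∈ (H a b).support, m ∈ F) :
    HH (F := F) (fun a b m => coeff m.1 (H a b)) = H := by
  funext a b
  ext m
  by_cases hm : m ∈ F
  · exact coeff_HH (fun a b m => coeff m.1 (H a b)) a b ⟨m, hm⟩
  · rw [coeff_HH' _ _ _ _ hm]
    by_contra hne
    exact hm (h a b m (by simpa using Ne.symm hne))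

lemma HH_smul (t : ℝ) (c : Fin n → Fin n → F → ℝ) (a b : Fin n) :
    HH (t • c) a b = C t * HH c a b := by
  unfold HH
  rw [Finset.mul_sum]
  refine Finset.sum_congr rfl fun m _ => ?_
  rw [C_mul_monomial]; rfl

lemma ZZ_smul (t : ℝ) (H : Fin n → Fin n → MvPolynomial (Fin n) ℝ) (a b c d : Fin n) :
    ZZ (fun a b => C t * H a b) a b c d = C t * ZZ H a b c d := by
  have hA : ∀ a c, AA (fun a b => C t * H a b) a c = C t * AA H a c := by
    intro a c
    unfold AA
    simp only [pderiv_C_mul, ← mul_add, ← mul_sub, ← Finset.mul_sum]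
    ring
  unfold ZZ
  simp only [pderiv_C_mul, hA]
  split_ifs <;> ring

lemma cont_HH (a b : Fin n) : Continuous fun p : (Fin n → Fin n → F → ℝ) × (Fin n → ℝ) =>
    eval p.2 (HH p.1 a b) := by
  unfold HH
  simp only [map_sum]
  refine continuous_finsetSum _ fun m _ => ?_
  have : ∀ p : (Fin n → Fin n → F → ℝ) × (Fin n → ℝ),
      eval p.2 (monomial m.1 (p.1 a b m)) = p.1 a b m * eval p.2 (monomial m.1 1) := by
    intro p
    rw [← mul_one (p.1 a b m), ← C_mul_monomial]; simp
  simp only [this]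
  exact Continuous.mul (by fun_prop) ((MvPolynomial.continuous_eval _).comp continuous_snd)

lemma cont_HH' (x : Fin n → ℝ) (a b : Fin n) :
    Continuous fun c : Fin n → Fin n → F → ℝ => eval x (HH c a b) := by
  unfold HH
  simp only [map_sum]
  refine continuous_finsetSum _ fun m _ => ?_
  have : ∀ c : Fin n → Fin n → F → ℝ,
      eval x (monomial m.1 (c a b m)) = c a b m * eval x (monomial m.1 1) := by
    intro c
    rw [← mul_one (c a b m), ← C_mul_monomial]; simp
  simp only [this]
  exact Continuous.mul (by fun_prop) continuous_const

lemma cont_D (k a b : Fin n) : Continuous fun p : (Fin n → Fin n → F → ℝ) × (Fin n → ℝ) =>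
    eval p.2 (pderiv k (HH p.1 a b)) := by
  unfold HH
  simp only [map_sum]
  refine continuous_finsetSum _ fun m _ => ?_
  have : ∀ p : (Fin n → Fin n → F → ℝ) × (Fin n → ℝ),
      eval p.2 (pderiv k (monomial m.1 (p.1 a b m)))
        = p.1 a b m * eval p.2 (pderiv k (monomial m.1 1)) := by
    intro p
    rw [← mul_one (p.1 a b m), ← C_mul_monomial, pderiv_C_mul]; simp
  simp only [this]
  exact Continuous.mul (by fun_prop) ((MvPolynomial.continuous_eval _).comp continuous_snd)

lemma cont_DD (k l a b : Fin n) : Continuous fun p : (Fin n → Fin n → F → ℝ) × (Fin n → ℝ) =>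
    eval p.2 (pderiv l (pderiv k (HH p.1 a b))) := by
  unfold HH
  simp only [map_sum]
  refine continuous_finsetSum _ fun m _ => ?_
  have : ∀ p : (Fin n → Fin n → F → ℝ) × (Fin n → ℝ),
      eval p.2 (pderiv l (pderiv k (monomial m.1 (p.1 a b m))))
        = p.1 a b m * eval p.2 (pderiv l (pderiv k (monomial m.1 1))) := by
    intro p
    rw [← mul_one (p.1 a b m), ← C_mul_monomial, pderiv_C_mul, pderiv_C_mul]; simp
  simp only [this]
  exact Continuous.mul (by fun_prop) ((MvPolynomial.continuous_eval _).comp continuous_snd)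

lemma cont_AA (a c : Fin n) : Continuous fun p : (Fin n → Fin n → F → ℝ) × (Fin n → ℝ) =>
    eval p.2 (AA (HH p.1) a c) := by
  unfold AA
  simp only [map_sub, map_add, map_mul, map_sum, eval_C]
  refine Continuous.sub (continuous_finsetSum _ fun e _ => ?_)
    (Continuous.mul (Continuous.mul continuous_const (continuous_finsetSum _ fun e _ =>
      continuous_finsetSum _ fun f _ => cont_DD _ _ _ _)) ?_)
  · exact ((cont_DD _ _ _ _).add (cont_DD _ _ _ _)).sub (cont_DD _ _ _ _)
  · split_ifs <;> simp <;> fun_prop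

lemma cont_ZZ (a b c d : Fin n) : Continuous fun p : (Fin n → Fin n → F → ℝ) × (Fin n → ℝ) =>
    eval p.2 (ZZ (HH p.1) a b c d) := by
  unfold ZZ
  simp only [map_sub, map_add, map_mul, map_sum, eval_C]
  have hif : ∀ (q : Prop) [Decidable q] (a c : Fin n),
      Continuous fun p : (Fin n → Fin n → F → ℝ) × (Fin n → ℝ) =>
        eval p.2 (if q then AA (HH p.1) a c else 0) := by
    intro q _ a c
    split_ifs
    · exact cont_AA a c
    · simp only [map_zero]; exact continuous_const
  exact ((((cont_DD _ _ _ _).sub (cont_DD _ _ _ _)).add (cont_DD _ _ _ _)).sub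
    (cont_DD _ _ _ _)).add (continuous_const.mul
      ((((hif _ _ _).sub (hif _ _ _)).add (hif _ _ _)).sub (hif _ _ _)))

end Param

/-- the interior integrand -/
noncomputable def fZ (H : Fin n → Fin n → MvPolynomial (Fin n) ℝ) (x : Fin n → ℝ) : ℝ :=
  ∑ a : Fin n, ∑ b : Fin n, ∑ c : Fin n, ∑ d : Fin n, (MvPolynomial.eval x (ZZ H a b c d)) ^ 2

def ext (x' : Fin (n - 1) → ℝ) : Fin n → ℝ :=
  fun a : Fin n => if h : (a : ℕ) < n - 1 then x' ⟨(a : ℕ), h⟩ else 0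

/-- the boundary integrand -/
noncomputable def fB (N : Fin n) (H : Fin n → Fin n → MvPolynomial (Fin n) ℝ)
    (x' : Fin (n - 1) → ℝ) : ℝ :=
  ∑ i : Fin n, ∑ j : Fin n, if (i : ℕ) < n - 1 ∧ (j : ℕ) < n - 1 then
    (MvPolynomial.eval (ext x') (MvPolynomial.pderiv N (H i j))) ^ 2 else 0

lemma cont_ext : Continuous (ext : (Fin (n - 1) → ℝ) → (Fin n → ℝ)) := by
  unfold ext
  refine continuous_pi fun a => ?_
  split_ifs
  · exact continuous_apply _
  · exact continuous_const

def UU (n : ℕ) (r : ℝ) : Set (Fin n → ℝ) := {x : Fin n → ℝ |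
  Real.sqrt (∑ a : Fin n, (x a - if (a : ℕ) = n - 1 then 3 * r / 2 else 0) ^ 2) < r / 4}

def KK (n : ℕ) : Set (Fin n → ℝ) := {x : Fin n → ℝ |
  Real.sqrt (∑ a : Fin n, (x a - if (a : ℕ) = n - 1 then 3 * 1 / 2 else 0) ^ 2) ≤ 1 / 4}

def KS (n : ℕ) : Set (Fin n → ℝ) := {x : Fin n → ℝ |
  Real.sqrt (∑ a : Fin n, (x a - if (a : ℕ) = n - 1 then 3 * 1 / 2 else 0) ^ 2) ≤ 1 / 8}

def KI (n : ℕ) : Set (Fin n → ℝ) := {x : Fin n → ℝ |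
  Real.sqrt (∑ a : Fin n, (x a - if (a : ℕ) = n - 1 then 3 * 1 / 2 else 0) ^ 2) < 1 / 8}

def NN (n : ℕ) (r : ℝ) : Set (Fin (n - 1) → ℝ) := {x' : Fin (n - 1) → ℝ |
  4 * r / 3 ≤ Real.sqrt (∑ i : Fin (n - 1), x' i ^ 2)
    ∧ Real.sqrt (∑ i : Fin (n - 1), x' i ^ 2) ≤ 5 * r / 3}

def NI (n : ℕ) : Set (Fin (n - 1) → ℝ) := {x' : Fin (n - 1) → ℝ |
  4 / 3 < Real.sqrt (∑ i : Fin (n - 1), x' i ^ 2)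
    ∧ Real.sqrt (∑ i : Fin (n - 1), x' i ^ 2) < 5 / 3}

lemma cont_dist {k : ℕ} (v : Fin k → ℝ) :
    Continuous fun x : Fin k → ℝ => Real.sqrt (∑ a, (x a - v a) ^ 2) := by fun_prop

lemma compact_ball {k : ℕ} (v : Fin k → ℝ) (ρ : ℝ) :
    IsCompact {x : Fin k → ℝ | Real.sqrt (∑ a, (x a - v a) ^ 2) ≤ ρ} := by
  refine Metric.isCompact_of_isClosed_isBounded (isClosed_le (cont_dist v) continuous_const) ?_
  refine (Metric.isBounded_closedBall (x := v) (r := max ρ 0)).subset fun x hx => ?_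
  rw [Metric.mem_closedBall, dist_pi_le_iff (le_max_right _ _)]
  intro b
  rw [Real.dist_eq]
  refine le_trans ?_ (le_max_left _ _)
  refine le_trans (Real.abs_le_sqrt ?_) hx
  exact Finset.single_le_sum (f := fun a => (x a - v a) ^ 2) (fun _ _ => sq_nonneg _) (Finset.mem_univ b)

lemma compact_KK : IsCompact (KK n) := compact_ball _ _
lemma compact_KS : IsCompact (KS n) := compact_ball _ _
lemma compact_NN (r : ℝ) : IsCompact (NN n r) := by
  have h := compact_ball (k := n - 1) 0 (5 * r / 3)
  refine h.of_isClosed_subset ?_ fun x hx => by simpa using hx.2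
  have := cont_dist (k := n - 1) 0
  simp only [Pi.zero_apply, sub_zero] at this
  exact (isClosed_le continuous_const this).inter (isClosed_le this continuous_const)

lemma zero_on {k : ℕ} (f : (Fin k → ℝ) → ℝ) (hf : Continuous f) (h0 : ∀ x, 0 ≤ f x)
    (s U : Set (Fin k → ℝ)) (hs : IsCompact s) (hU : IsOpen U) (hUs : U ⊆ s)
    (h : ∫ x in s, f x = 0) : ∀ x ∈ U, f x = 0 := by
  have hi : IntegrableOn f s := hf.continuousOn.integrableOn_compact hs
  rw [setIntegral_eq_zero_iff_of_nonneg_ae (Filter.Eventually.of_forall h0) hi] at h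
  have h' : f =ᵐ[volume.restrict U] 0 := ae_restrict_of_ae_restrict_of_subset hUs h
  intro x hx
  exact Measure.eqOn_open_of_ae_eq h' hU hf.continuousOn continuousOn_const hx

lemma fZ_nonneg (H : Fin n → Fin n → MvPolynomial (Fin n) ℝ) (x : Fin n → ℝ) : 0 ≤ fZ H x := by
  unfold fZ; positivity

lemma fB_nonneg (N : Fin n) (H : Fin n → Fin n → MvPolynomial (Fin n) ℝ) (x) : 0 ≤ fB N H x := by
  unfold fB
  refine Finset.sum_nonneg fun i _ => Finset.sum_nonneg fun j _ => ?_
  split_ifs <;> positivity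

lemma cont_fZ (H : Fin n → Fin n → MvPolynomial (Fin n) ℝ) : Continuous (fZ H) := by
  unfold fZ
  refine continuous_finsetSum _ fun a _ => continuous_finsetSum _ fun b _ =>
    continuous_finsetSum _ fun c _ => continuous_finsetSum _ fun d _ => ?_
  exact (MvPolynomial.continuous_eval _).pow 2

lemma cont_fB (N : Fin n) (H : Fin n → Fin n → MvPolynomial (Fin n) ℝ) : Continuous (fB N H) := by
  unfold fB
  refine continuous_finsetSum _ fun a _ => continuous_finsetSum _ fun b _ => ?_
  split_ifs
  · exact ((MvPolynomial.continuous_eval _).comp cont_ext).pow 2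
  · exact continuous_const

noncomputable def QQ (N : Fin n) (H : Fin n → Fin n → MvPolynomial (Fin n) ℝ) : ℝ :=
  (∫ x in KS n, fZ H x) + ∫ x' in NN n 1, fB N H x'

lemma cont_QQ {F : Finset (Fin n →₀ ℕ)} (N : Fin n) :
    Continuous fun c : Fin n → Fin n → F → ℝ => QQ N (HH c) := by
  unfold QQ
  refine Continuous.add ?_ ?_
  · refine continuous_parametric_integral_of_continuous (f := fun c x => fZ (HH c) x) ?_ compact_KS
    unfold fZ Function.uncurry
    refine continuous_finsetSum _ fun a _ => continuous_finsetSum _ fun b _ =>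
      continuous_finsetSum _ fun c _ => continuous_finsetSum _ fun d _ => ?_
    exact (cont_ZZ _ _ _ _).pow 2
  · refine continuous_parametric_integral_of_continuous (f := fun c x => fB N (HH c) x) ?_ (compact_NN 1)
    unfold fB Function.uncurry
    refine continuous_finsetSum _ fun a _ => continuous_finsetSum _ fun b _ => ?_
    split_ifs
    · exact ((cont_D N a b).comp (continuous_fst.prodMk (cont_ext.comp continuous_snd))).pow 2
    · exact continuous_const

lemma QQ_smul (N : Fin n) (t : ℝ) (H : Fin n → Fin n → MvPolynomial (Fin n) ℝ) :
    QQ N (fun a b => C t * H a b) = t ^ 2 * QQ N H := by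
  have h1 : ∀ x, fZ (fun a b => C t * H a b) x = t ^ 2 * fZ H x := by
    intro x
    unfold fZ
    simp only [ZZ_smul, map_mul, eval_C, mul_pow, Finset.mul_sum]
  have h2 : ∀ x, fB N (fun a b => C t * H a b) x = t ^ 2 * fB N H x := by
    intro x
    unfold fB
    simp only [pderiv_C_mul, map_mul, eval_C, mul_pow, Finset.mul_sum, mul_ite, mul_zero]
  unfold QQ
  simp only [h1, h2, integral_const_mul]
  ring

lemma fin_sq_zero {ι : Type*} (s : Finset ι) (f : ι → ℝ) (hf : ∀ i ∈ s, 0 ≤ f i)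
    (h : ∑ i ∈ s, f i = 0) : ∀ i ∈ s, f i = 0 := (Finset.sum_eq_zero_iff_of_nonneg hf).mp h

/-- the class of tensors (only what is needed) -/
structure Cls (N : Fin n) (H : Fin n → Fin n → MvPolynomial (Fin n) ℝ) : Prop where
  hs : ∀ a b, H a b = H b a
  hN : ∀ a, H a N = 0
  hS : ∀ i : Fin n, (i : ℕ) < n - 1 → ∀ x : Fin n → ℝ, x N = 0 →
        (∑ j : Fin n, if (j : ℕ) < n - 1 then x j * MvPolynomial.eval x (H i j) else 0) = 0

lemma QQ_pos (hn : 4 ≤ n) (N : Fin n) (hNv : (N : ℕ) = n - 1)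
    (H : Fin n → Fin n → MvPolynomial (Fin n) ℝ)
    (hdeg : ∀ a b : Fin n, ∀ m ∈ (H a b).support, 1 ≤ m.sum (fun _ e => e))
    (hH : Cls N H) (hQ : QQ N H = 0) : ∀ a b, H a b = 0 := by
  have i1 : 0 ≤ ∫ x in KS n, fZ H x := integral_nonneg (fZ_nonneg H)
  have i2 : 0 ≤ ∫ x' in NN n 1, fB N H x' := integral_nonneg (fB_nonneg N H)
  unfold QQ at hQ
  have e1 : ∫ x in KS n, fZ H x = 0 := by linarith
  have e2 : ∫ x' in NN n 1, fB N H x' = 0 := by linarith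
  have z1 := zero_on _ (cont_fZ H) (fZ_nonneg H) _ (KI n) compact_KS
    (isOpen_lt (cont_dist _) continuous_const) (fun x hx => by
      simp only [KI, KS, Set.mem_ofPred_eq] at *; exact hx.le) e1
  have cn := cont_dist (k := n - 1) 0
  simp only [Pi.zero_apply, sub_zero] at cn
  have oNI : IsOpen (NI n) := (isOpen_lt continuous_const cn).inter (isOpen_lt cn continuous_const)
  have z2 := zero_on _ (cont_fB N H) (fB_nonneg N H) _ (NI n) (compact_NN 1) oNI
    (fun x hx => ⟨by linarith [hx.1], by linarith [hx.2]⟩) e2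
  have hZ : ∀ a b c d, ZZ H a b c d = 0 := by
    intro a b c d
    refine zero_of_open _ (KI n) (isOpen_lt (cont_dist _) continuous_const)
      ⟨fun a => if (a : ℕ) = n - 1 then 3 * 1 / 2 else 0, by simp [KI]⟩ fun x hx => ?_
    have := z1 x hx
    unfold fZ at this
    have := fin_sq_zero _ _ (fun _ _ => by positivity) this a (Finset.mem_univ _)
    have := fin_sq_zero _ _ (fun _ _ => by positivity) this b (Finset.mem_univ _)
    have := fin_sq_zero _ _ (fun _ _ => by positivity) this c (Finset.mem_univ _)
    have := fin_sq_zero _ _ (fun _ _ => by positivity) this d (Finset.mem_univ _)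
    exact pow_eq_zero_iff (two_ne_zero) |>.mp this
  let ρ : (Fin n → ℝ) → (Fin (n - 1) → ℝ) := fun x i => x ⟨i, by omega⟩
  have hρ : Continuous ρ := by
    refine continuous_pi fun i => continuous_apply _
  refine vanish hn H N hNv hdeg hH.hs hH.hN hH.hS hZ (ρ ⁻¹' NI n) (oNI.preimage hρ) ?_ ?_
  · refine ⟨fun a => if (a : ℕ) = 0 then 3 / 2 else 0, ?_⟩
    have : ∑ i : Fin (n - 1), (ρ (fun a => if (a : ℕ) = 0 then 3 / 2 else 0) i) ^ 2 = (3 / 2 : ℝ) ^ 2 := by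
      rw [Finset.sum_eq_single (⟨0, by omega⟩ : Fin (n - 1))]
      · simp [ρ]
      · intro b _ hb
        have : (b : ℕ) ≠ 0 := fun h => hb (Fin.ext h)
        simp [ρ, this]
      · simp
    rw [Set.mem_preimage]
    unfold NI
    rw [Set.mem_ofPred_eq, this, Real.sqrt_sq (by norm_num)]
    norm_num
  · intro x hx i j hi hj
    have := z2 _ hx
    unfold fB at this
    have := fin_sq_zero _ _ (fun _ _ => Finset.sum_nonneg fun _ _ => by split_ifs <;> positivity)
      this i (Finset.mem_univ _)
    have := fin_sq_zero _ _ (fun _ _ => by split_ifs <;> positivity) this j (Finset.mem_univ _)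
    rw [if_pos ⟨hi, hj⟩] at this
    have := pow_eq_zero_iff (two_ne_zero) |>.mp this
    exact this

lemma unit_bound (hn : 4 ≤ n) (N : Fin n) (hNv : (N : ℕ) = n - 1) (D : ℕ) :
    ∃ C : ℝ, 0 < C ∧ ∀ H : Fin n → Fin n → MvPolynomial (Fin n) ℝ,
      (∀ a b : Fin n, ∀ m ∈ (H a b).support,
        1 ≤ m.sum (fun _ e => e) ∧ m.sum (fun _ e => e) ≤ D) → Cls N H →
      (∑ i : Fin n, ∑ j : Fin n, ∑ m ∈ (H i j).support, (coeff m (H i j)) ^ 2) ≤ C * QQ N H := by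
  classical
  have hfin : {m : Fin n →₀ ℕ | 1 ≤ m.sum (fun _ e => e) ∧ m.sum (fun _ e => e) ≤ D}.Finite := by
    refine (Finsupp.finite_of_degree_le (σ := Fin n) D).subset fun m hm => ?_
    have := hm.2
    exact this
  obtain ⟨F, hFm⟩ : ∃ F : Finset (Fin n →₀ ℕ), ∀ m, m ∈ F ↔
      (1 ≤ m.sum (fun _ e => e) ∧ m.sum (fun _ e => e) ≤ D) :=
    ⟨hfin.toFinset, fun m => by rw [Set.Finite.mem_toFinset]; rfl⟩
  have hsupp : ∀ (c : Fin n → Fin n → F → ℝ) (a b : Fin n), ∀ m ∈ (HH c a b).support, m ∈ F := by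
    intro c a b m hm
    by_contra h
    exact (mem_support_iff.mp hm) (coeff_HH' c a b m h)
  let S : Set (Fin n → Fin n → F → ℝ) := {c | Cls N (HH c)}
  have hSc : IsClosed S := by
    have hev : ∀ (x : Fin n → ℝ) a b, Continuous fun c : Fin n → Fin n → F → ℝ => eval x (HH c a b) :=
      fun x a b => cont_HH' x a b
    have c1 : ∀ a b, IsClosed {c : Fin n → Fin n → F → ℝ | HH c a b = HH c b a} := by
      intro a b
      simp only [MvPolynomial.funext_iff, Set.ofPred_forall]
      exact isClosed_iInter fun x => isClosed_eq (hev _ _ _) (hev _ _ _)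
    have c2 : ∀ a, IsClosed {c : Fin n → Fin n → F → ℝ | HH c a N = 0} := by
      intro a
      simp only [MvPolynomial.funext_iff, Set.ofPred_forall, map_zero]
      exact isClosed_iInter fun x => isClosed_eq (hev _ _ _) continuous_const
    have c3 : ∀ (i : Fin n) (x : Fin n → ℝ), IsClosed {c : Fin n → Fin n → F → ℝ |
          (∑ j : Fin n, if (j : ℕ) < n - 1 then x j * MvPolynomial.eval x (HH c i j) else 0) = 0} := by
      intro i x
      refine isClosed_eq (continuous_finsetSum _ fun j _ => ?_) continuous_const
      split_ifs
      · exact continuous_const.mul (hev _ _ _)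
      · exact continuous_const
    have hcl : S = {c | ∀ a b, HH c a b = HH c b a} ∩ ({c | ∀ a, HH c a N = 0} ∩ {c |
        ∀ i : Fin n, (i : ℕ) < n - 1 → ∀ x : Fin n → ℝ, x N = 0 →
        (∑ j : Fin n, if (j : ℕ) < n - 1 then x j * MvPolynomial.eval x (HH c i j) else 0) = 0}) :=
      Set.ext fun c => ⟨fun h => ⟨h.hs, h.hN, h.hS⟩, fun h => ⟨h.1, h.2.1, h.2.2⟩⟩
    rw [hcl]
    simp only [Set.ofPred_forall]
    exact (isClosed_iInter fun a => isClosed_iInter fun b => c1 a b).inter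
      ((isClosed_iInter fun a => c2 a).inter (isClosed_iInter fun i => isClosed_iInter fun _ =>
        isClosed_iInter fun x => isClosed_iInter fun _ => c3 i x))
  have hKc : IsCompact (Metric.sphere (0 : Fin n → Fin n → F → ℝ) 1 ∩ S) :=
    (isCompact_sphere _ _).inter_right hSc
  have hQ0 : ∀ c : Fin n → Fin n → F → ℝ, 0 ≤ QQ N (HH c) := fun c =>
    add_nonneg (integral_nonneg (fZ_nonneg _)) (integral_nonneg (fB_nonneg N _))
  obtain ⟨δ, hδ, hmin⟩ : ∃ δ : ℝ, 0 < δ ∧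
      ∀ c ∈ Metric.sphere (0 : Fin n → Fin n → F → ℝ) 1 ∩ S, δ ≤ QQ N (HH c) := by
    rcases (Metric.sphere (0 : Fin n → Fin n → F → ℝ) 1 ∩ S).eq_empty_or_nonempty with he | hne
    · exact ⟨1, one_pos, by simp [he]⟩
    · obtain ⟨c, hc, hm⟩ := hKc.exists_isMinOn hne (cont_QQ N).continuousOn
      refine ⟨QQ N (HH c), ?_, fun c' hc' => hm hc'⟩
      refine lt_of_le_of_ne (hQ0 c) fun h0 => ?_
      have hz := QQ_pos hn N hNv (HH c) (fun a b m hm => ((hFm m).mp (hsupp c a b m hm)).1) hc.2 h0.symm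
      have : c = 0 := by
        funext a b m
        rw [← coeff_HH c a b m, hz]; simp
      have h1 := hc.1
      rw [this] at h1
      simp at h1
  have hmain : ∀ c ∈ S, δ * ‖c‖ ^ 2 ≤ QQ N (HH c) := by
    intro c hc
    by_cases h0 : c = 0
    · subst h0; simpa using hQ0 0
    have hpos : 0 < ‖c‖ := norm_pos_iff.mpr h0
    have hfe : HH (‖c‖⁻¹ • c) = fun a b => C ‖c‖⁻¹ * HH c a b := by
      funext a b; exact HH_smul _ _ _ _
    have hm := hmin (‖c‖⁻¹ • c) ⟨by simp [norm_smul, hpos.ne'], by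
      change Cls N (HH (‖c‖⁻¹ • c))
      rw [hfe]
      have hc' : Cls N (HH c) := hc
      refine ⟨fun a b => by rw [hc'.hs], fun a => by rw [hc'.hN, mul_zero], fun i hi x hx => ?_⟩
      have := hc'.hS i hi x hx
      refine Eq.trans ?_ ((congrArg (fun y => ‖c‖⁻¹ * y) this).trans (mul_zero _))
      rw [Finset.mul_sum]
      refine Finset.sum_congr rfl fun j _ => ?_
      split_ifs
      · rw [map_mul, eval_C]; ring
      · rw [mul_zero]⟩
    rw [hfe, QQ_smul] at hm
    calc δ * ‖c‖ ^ 2 ≤ (‖c‖⁻¹ ^ 2 * QQ N (HH c)) * ‖c‖ ^ 2 := by gcongr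
      _ = QQ N (HH c) := by field_simp
  refine ⟨(n * (n * (F.card + 1))) / δ, by positivity, fun H hH hC => ?_⟩
  set c : Fin n → Fin n → F → ℝ := fun a b m => coeff m.1 (H a b) with hc
  have hHc : HH c = H := HH_of H fun a b m hm => (hFm m).mpr (hH a b m hm)
  have hb := hmain c (by change Cls N (HH c); rwa [hHc])
  rw [hHc] at hb
  have hle : ∀ i j, ∑ m ∈ (H i j).support, (coeff m (H i j)) ^ 2 ≤ (F.card + 1) * ‖c‖ ^ 2 := by
    intro i j
    have hsub : (H i j).support ⊆ F := fun m hm => (hFm m).mpr (hH i j m hm)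
    have : ∀ m ∈ (H i j).support, (coeff m (H i j)) ^ 2 ≤ ‖c‖ ^ 2 := by
      intro m hm
      have h1 : ‖c i j ⟨m, hsub hm⟩‖ ≤ ‖c‖ :=
        (norm_le_pi_norm (c i j) _).trans ((norm_le_pi_norm (c i) j).trans (norm_le_pi_norm c i))
      rw [Real.norm_eq_abs] at h1
      exact sq_le_sq' (by linarith [neg_abs_le (c i j ⟨m, hsub hm⟩)]) ((le_abs_self _).trans h1)
    refine (Finset.sum_le_card_nsmul _ _ _ this).trans ?_
    rw [nsmul_eq_mul]
    gcongr
    have := Finset.card_le_card hsub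
    have : ((H i j).support.card : ℝ) ≤ F.card := by exact_mod_cast this
    linarith
  calc (∑ i : Fin n, ∑ j : Fin n, ∑ m ∈ (H i j).support, (coeff m (H i j)) ^ 2)
      ≤ ∑ i : Fin n, ∑ j : Fin n, (F.card + 1) * ‖c‖ ^ 2 :=
        Finset.sum_le_sum fun i _ => Finset.sum_le_sum fun j _ => hle i j
    _ = (n * (n * (F.card + 1))) / δ * (δ * ‖c‖ ^ 2) := by
        simp; field_simp
    _ ≤ _ := by gcongr

noncomputable def sc (r : ℝ) : MvPolynomial (Fin n) ℝ →ₐ[ℝ] MvPolynomial (Fin n) ℝ :=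
  bind₁ (fun i => C r * X i)

lemma sc_C (r t : ℝ) : sc (n := n) r (C t) = C t := by simp [sc]

lemma sc_monomial (r : ℝ) (m : Fin n →₀ ℕ) (a : ℝ) :
    sc r (monomial m a) = monomial m (r ^ (m.sum (fun _ e => e)) * a) := by
  unfold sc
  rw [bind₁_monomial]
  simp only [mul_pow, Finset.prod_mul_distrib]
  rw [monomial_eq (s := m), Finset.prod_pow_eq_pow_sum, C_mul]
  simp only [Finsupp.prod, Finsupp.sum, C_pow]
  ring

lemma coeff_sc (r : ℝ) (p : MvPolynomial (Fin n) ℝ) (m : Fin n →₀ ℕ) :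
    coeff m (sc r p) = r ^ (m.sum (fun _ e => e)) * coeff m p := by
  classical
  induction p using MvPolynomial.induction_on' with
  | monomial u a =>
    rw [sc_monomial, coeff_monomial, coeff_monomial]
    split_ifs with h
    · rw [h]
    · simp
  | add p q hp hq => rw [map_add, coeff_add, hp, hq, coeff_add]; ring

lemma support_sc (r : ℝ) (hr : r ≠ 0) (p : MvPolynomial (Fin n) ℝ) :
    (sc r p).support = p.support := by
  ext m
  simp [mem_support_iff, coeff_sc, hr]

lemma eval_sc (r : ℝ) (p : MvPolynomial (Fin n) ℝ) (x : Fin n → ℝ) :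
    eval x (sc r p) = eval (r • x) p := by
  induction p using MvPolynomial.induction_on with
  | C a => simp [sc]
  | add p q hp hq => simp [hp, hq]
  | mul_X p i hp => rw [map_mul, map_mul, hp]; simp [sc]

lemma pderiv_sc (r : ℝ) (p : MvPolynomial (Fin n) ℝ) (i : Fin n) :
    pderiv i (sc r p) = C r * sc r (pderiv i p) := by
  induction p using MvPolynomial.induction_on with
  | C a => simp [sc]
  | add p q hp hq => simp [hp, hq, mul_add]
  | mul_X p j hp =>
    have hX : sc (n := n) r (X j) = C r * X j := by simp [sc]
    rw [map_mul, pderiv_mul, hp, pderiv_mul, map_add, map_mul, map_mul, hX, pderiv_C_mul,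
      pderiv_X, Pi.single_apply]
    split_ifs
    · simp; ring
    · simp; ring

lemma ZZ_sc (r : ℝ) (H : Fin n → Fin n → MvPolynomial (Fin n) ℝ) (a b c d : Fin n) :
    ZZ (fun a b => sc r (H a b)) a b c d = C (r ^ 2) * sc r (ZZ H a b c d) := by
  have hA : ∀ a c, AA (fun a b => sc r (H a b)) a c = C (r ^ 2) * sc r (AA H a c) := by
    intro a c
    unfold AA
    simp only [pderiv_sc, pderiv_C_mul, map_sub, map_add, map_mul, map_sum, sc_C, C_pow]
    simp only [← mul_add, ← mul_sub, ← Finset.mul_sum]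
    split_ifs
    · simp only [map_one]; ring
    · simp only [map_zero]; ring
  unfold ZZ
  simp only [pderiv_sc, pderiv_C_mul, hA, map_sub, map_add, map_mul, sc_C, apply_ite (sc r), map_zero, C_pow]
  split_ifs <;> ring

lemma fZ_sc (r : ℝ) (H : Fin n → Fin n → MvPolynomial (Fin n) ℝ) (x : Fin n → ℝ) :
    fZ (fun a b => sc r (H a b)) x = r ^ 4 * fZ H (r • x) := by
  unfold fZ
  simp only [ZZ_sc, map_mul, eval_C, eval_sc, mul_pow, Finset.mul_sum, ← pow_mul]

lemma ext_smul (r : ℝ) (x : Fin (n - 1) → ℝ) : ext (n := n) (r • x) = r • ext x := by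
  funext a
  simp only [ext, Pi.smul_apply, smul_eq_mul]
  split_ifs <;> simp

lemma fB_sc (r : ℝ) (N : Fin n) (H : Fin n → Fin n → MvPolynomial (Fin n) ℝ)
    (x : Fin (n - 1) → ℝ) :
    fB N (fun a b => sc r (H a b)) x = r ^ 2 * fB N H (r • x) := by
  unfold fB
  simp only [pderiv_sc, map_mul, eval_C, eval_sc, mul_pow, Finset.mul_sum, mul_ite, mul_zero, ext_smul]

lemma sqrt_scale {k : ℕ} (r : ℝ) (hr : 0 < r) (x v w : Fin k → ℝ) (h : ∀ i, w i = r * v i) :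
    Real.sqrt (∑ i, (x i - w i) ^ 2) = r * Real.sqrt (∑ i, ((r⁻¹ • x) i - v i) ^ 2) := by
  have : ∑ i, (x i - w i) ^ 2 = r ^ 2 * ∑ i, ((r⁻¹ • x) i - v i) ^ 2 := by
    rw [Finset.mul_sum]
    refine Finset.sum_congr rfl fun i _ => ?_
    rw [h i, Pi.smul_apply, smul_eq_mul]
    field_simp
  rw [this, Real.sqrt_mul (by positivity), Real.sqrt_sq hr.le]

open Pointwise in
lemma smul_UU (r : ℝ) (hr : 0 < r) : r • UU n 1 = UU n r := by
  ext x
  rw [Set.mem_smul_set_iff_inv_smul_mem₀ hr.ne']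
  simp only [UU, Set.mem_ofPred_eq]
  rw [sqrt_scale r hr x (fun a => if (a : ℕ) = n - 1 then 3 * 1 / 2 else 0)
    (fun a => if (a : ℕ) = n - 1 then 3 * r / 2 else 0) (fun i => by split_ifs <;> ring),
    show r / 4 = r * (1 / 4) by ring, mul_lt_mul_iff_right₀ hr]

open Pointwise in
lemma smul_NN (r : ℝ) (hr : 0 < r) : r • NN n 1 = NN n r := by
  ext x
  rw [Set.mem_smul_set_iff_inv_smul_mem₀ hr.ne']
  have := sqrt_scale r hr x 0 0 (by simp)
  simp only [Pi.zero_apply, sub_zero] at this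
  simp only [NN, Set.mem_ofPred_eq]
  rw [this, show 4 * r / 3 = r * (4 * 1 / 3) by ring, show 5 * r / 3 = r * (5 * 1 / 3) by ring,
    mul_le_mul_iff_right₀ hr, mul_le_mul_iff_right₀ hr]

lemma QQ_le (N : Fin n) (H : Fin n → Fin n → MvPolynomial (Fin n) ℝ) :
    QQ N H ≤ (∫ x in UU n 1, fZ H x) + ∫ x' in NN n 1, fB N H x' := by
  unfold QQ
  gcongr ?_ + _
  refine setIntegral_mono_set ?_ (Filter.Eventually.of_forall (fZ_nonneg H)) ?_
  · exact ((cont_fZ H).continuousOn.integrableOn_compact compact_KK).mono_set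
      fun x hx => by simp only [UU, KK, Set.mem_ofPred_eq] at *; exact hx.le
  · refine Filter.Eventually.of_forall fun x hx => ?_
    change _ < _
    exact lt_of_le_of_lt (show _ ≤ _ from hx) (by norm_num)

lemma final (hn : 4 ≤ n) (N : Fin n) (hNv : (N : ℕ) = n - 1) (D : ℕ) :
    ∃ C : ℝ, 0 < C ∧ ∀ H : Fin n → Fin n → MvPolynomial (Fin n) ℝ,
      (∀ a b : Fin n, ∀ m ∈ (H a b).support,
        1 ≤ m.sum (fun _ e => e) ∧ m.sum (fun _ e => e) ≤ D) → Cls N H → ∀ r : ℝ, 0 < r →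
      (∑ i : Fin n, ∑ j : Fin n, if (i : ℕ) < n - 1 ∧ (j : ℕ) < n - 1 then
        ∑ m ∈ (H i j).support, (coeff m (H i j)) ^ 2
          * r ^ (2 * (m.sum (fun _ e => e) : ℤ) - 4 + (n : ℤ)) else 0)
      ≤ C * (∫ x in UU n r, fZ H x) + C * r⁻¹ * ∫ x' in NN n r, fB N H x' := by
  obtain ⟨K, hK, hb⟩ := unit_bound hn N hNv D
  refine ⟨K, hK, fun H hH hC r hr => ?_⟩
  have hC' : Cls N (fun a b => sc r (H a b)) := by
    refine ⟨fun a b => by rw [hC.hs], fun a => by rw [hC.hN, map_zero], fun i hi x hx => ?_⟩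
    have := hC.hS i hi (r • x) (by simp [hx])
    have h2 : r * (∑ j : Fin n, if (j : ℕ) < n - 1 then x j * MvPolynomial.eval x (sc r (H i j)) else 0) = 0 := by
      refine Eq.trans ?_ this
      rw [Finset.mul_sum]
      refine Finset.sum_congr rfl fun j _ => ?_
      split_ifs
      · rw [eval_sc, Pi.smul_apply, smul_eq_mul]; ring
      · rw [mul_zero]
    exact (mul_eq_zero.mp h2).resolve_left hr.ne'
  have h1 := (hb (fun a b => sc r (H a b))
    (fun a b m hm => hH a b m (by rwa [support_sc r hr.ne'] at hm)) hC').trans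
    (mul_le_mul_of_nonneg_left (QQ_le N _) hK.le)
  simp only [support_sc r hr.ne', coeff_sc, fZ_sc, fB_sc, integral_const_mul] at h1
  rw [Measure.setIntegral_comp_smul_of_pos volume (fZ H) _ hr,
    Measure.setIntegral_comp_smul_of_pos volume (fB N H) _ hr, smul_UU r hr, smul_NN r hr] at h1
  simp only [Module.finrank_fintype_fun_eq_card, Fintype.card_fin, smul_eq_mul] at h1
  have hl : (∑ i : Fin n, ∑ j : Fin n, if (i : ℕ) < n - 1 ∧ (j : ℕ) < n - 1 then
        ∑ m ∈ (H i j).support, (coeff m (H i j)) ^ 2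
          * r ^ (2 * (m.sum (fun _ e => e) : ℤ) - 4 + (n : ℤ)) else 0)
      ≤ r ^ (n - 4) * ∑ i : Fin n, ∑ j : Fin n, ∑ m ∈ (H i j).support,
          (r ^ (m.sum (fun _ e => e)) * coeff m (H i j)) ^ 2 := by
    rw [Finset.mul_sum]
    refine Finset.sum_le_sum fun i _ => ?_
    rw [Finset.mul_sum]
    refine Finset.sum_le_sum fun j _ => ?_
    split_ifs
    · rw [Finset.mul_sum]
      refine le_of_eq (Finset.sum_congr rfl fun m _ => ?_)
      have : r ^ (2 * (m.sum (fun _ e => e) : ℤ) - 4 + (n : ℤ))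
          = r ^ (n - 4) * (r ^ (m.sum (fun _ e => e))) ^ 2 := by
        rw [← pow_mul, ← pow_add, ← zpow_natCast]
        congr 1
        have hcast : ((m.sum (fun _ e => e) : ℕ) : ℤ) = (m.sum (fun _ e => (e : ℤ))) := by
          simp [Finsupp.sum]
        push_cast [hn]
        ring
      rw [this]; ring
    · positivity
  refine hl.trans ((mul_le_mul_of_nonneg_left h1 (by positivity)).trans (le_of_eq ?_))
  obtain ⟨k, rfl⟩ : ∃ k, n = k + 4 := ⟨n - 4, by omega⟩
  have e1 : k + 4 - 4 = k := by omega
  have e2 : k + 4 - 1 = k + 3 := by omega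
  generalize (∫ x in UU (k + 4) r, fZ H x) = I1
  generalize (∫ x in NN (k + 4) r, fB N H x) = I2
  rw [e1, e2]
  field_simp
  ring

end Aux

/-- coercivity of the algebraic Weyl tensor.  With
`U_r = B_{r/4}(0,…,0,3r/2) ⊂ ℝⁿ₊`, there is `C = C(n) > 0` such that for every `r > 0`
and every tensor `H` of the given class,
`Σ_{i,j<n} Σ_{1≤|α|≤d} h_{ij,α}² r^{2|α|−4+n}
  ≤ C ∫_{U_r} Σ Z_{abcd}² dx + C r⁻¹ ∫_{4r/3≤|x̄|≤5r/3} Σ (∂_nH_{ij}(x̄,0))² dx̄`. -/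
theorem stmt_4 (n : ℕ) (hn : 4 ≤ n) :
    ∃ C : ℝ, 0 < C ∧
    ∀ (H : Fin n → Fin n → MvPolynomial (Fin n) ℝ),
      (∀ a b : Fin n, ∀ m ∈ (H a b).support,
        1 ≤ m.sum (fun _ e => e) ∧ m.sum (fun _ e => e) ≤ (n - 2) / 2) →
      (∀ a b : Fin n, H a b = H b a) →
      ((∑ a : Fin n, H a a) = 0) →
      (∀ a : Fin n, H a ⟨n - 1, by omega⟩ = 0) →
      (∀ i j k : Fin n, (i : ℕ) < n - 1 → (j : ℕ) < n - 1 → (k : ℕ) < n - 1 →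
        MvPolynomial.eval (0 : Fin n → ℝ) (MvPolynomial.pderiv k (H i j)) = 0) →
      (∀ i : Fin n, (i : ℕ) < n - 1 → ∀ x : Fin n → ℝ, x ⟨n - 1, by omega⟩ = 0 →
        (∑ j : Fin n, if (j : ℕ) < n - 1 then x j * MvPolynomial.eval x (H i j) else 0) = 0) →
    ∀ (A : Fin n → Fin n → MvPolynomial (Fin n) ℝ),
      (∀ a c : Fin n, A a c =
        (∑ e : Fin n,
          (MvPolynomial.pderiv c (MvPolynomial.pderiv e (H a e))
            + MvPolynomial.pderiv a (MvPolynomial.pderiv e (H c e))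
            - MvPolynomial.pderiv e (MvPolynomial.pderiv e (H a c))))
        - MvPolynomial.C (1 / ((n : ℝ) - 1))
            * (∑ e : Fin n, ∑ f : Fin n,
                MvPolynomial.pderiv e (MvPolynomial.pderiv f (H e f)))
            * (if a = c then 1 else 0)) →
    ∀ (Z : Fin n → Fin n → Fin n → Fin n → MvPolynomial (Fin n) ℝ),
      (∀ a b c d : Fin n, Z a b c d =
        MvPolynomial.pderiv b (MvPolynomial.pderiv d (H a c))
          - MvPolynomial.pderiv b (MvPolynomial.pderiv c (H a d))
          + MvPolynomial.pderiv a (MvPolynomial.pderiv c (H d b))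
          - MvPolynomial.pderiv a (MvPolynomial.pderiv d (H b c))
          + MvPolynomial.C (1 / ((n : ℝ) - 2))
              * ((if b = d then A a c else 0) - (if b = c then A a d else 0)
                  + (if a = c then A b d else 0) - (if d = b then A b c else 0))) →
    ∀ r : ℝ, 0 < r →
      (∑ i : Fin n, ∑ j : Fin n,
        if (i : ℕ) < n - 1 ∧ (j : ℕ) < n - 1 then
          ∑ m ∈ (H i j).support,
            (MvPolynomial.coeff m (H i j)) ^ 2
              * r ^ (2 * (m.sum (fun _ e => e) : ℤ) - 4 + (n : ℤ))
        else 0)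
      ≤ C * (∫ x in {x : Fin n → ℝ |
              Real.sqrt (∑ a : Fin n,
                (x a - if (a : ℕ) = n - 1 then 3 * r / 2 else 0) ^ 2) < r / 4},
            ∑ a : Fin n, ∑ b : Fin n, ∑ c : Fin n, ∑ d : Fin n,
              (MvPolynomial.eval x (Z a b c d)) ^ 2)
        + C * r⁻¹ * ∫ x' in {x' : Fin (n - 1) → ℝ |
              4 * r / 3 ≤ Real.sqrt (∑ i : Fin (n - 1), x' i ^ 2)
                ∧ Real.sqrt (∑ i : Fin (n - 1), x' i ^ 2) ≤ 5 * r / 3},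
            ∑ i : Fin n, ∑ j : Fin n,
              if (i : ℕ) < n - 1 ∧ (j : ℕ) < n - 1 then
                (MvPolynomial.eval
                    (fun a : Fin n => if h : (a : ℕ) < n - 1 then x' ⟨(a : ℕ), h⟩ else 0)
                    (MvPolynomial.pderiv (⟨n - 1, by omega⟩ : Fin n) (H i j))) ^ 2
              else 0 := by
  obtain ⟨C, hC, h⟩ := Aux.final hn ⟨n - 1, by omega⟩ rfl ((n - 2) / 2)
  refine ⟨C, hC, fun H hdeg hs _ hN _ hS A hA Z hZ r hr => ?_⟩
  have hA' : A = Aux.AA H := by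
    funext a c; exact hA a c
  subst hA'
  have hZ' : Z = Aux.ZZ H := by
    funext a b c d; exact hZ a b c d
  subst hZ'
  exact h H hdeg ⟨hs, hN, hS⟩ r hr
end
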